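/- There exists a constant C = C(n) such that for every 1 ≤ p ≤ ∞, every f ∈ W^{1,p}(ℝⁿ), every α ∈ (0,∞), every r ∈ (0,∞), and every x ∈ ℝⁿ with M|∇f|(x) ≤ α at which the limit f*(x) = lim_{δ→0⁺} ⨍_{B(x,δ)} f(y) dy exists and is finite, one has |f*(x) − f_{B(x,r)}| ≤ C r α, where f_{B(x,r)} := ⨍_{B(x,r)} f(y) dy. -/

import Mathlib

open MeasureTheory Filter Metric Set
open scoped ENNReal NNReal Topology

noncomputable section

abbrev Euc (n : ℕ) := EuclideanSpace ℝ (Fin n)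

/-- Degree of a multi-index. -/
def mdeg {n : ℕ} (α : Fin n → ℕ) : ℕ := ∑ i, α i

/-- Iterated partial derivative along a list of coordinate directions. -/
def listDeriv {n : ℕ} : List (Fin n) → (Euc n → ℝ) → (Euc n → ℝ)
  | [], η => η
  | i :: l, η => fun x => fderiv ℝ (listDeriv l η) x (EuclideanSpace.single i 1)

/-- The partial derivative `D^α η` associated to a multi-index `α`. -/
def mderiv {n : ℕ} (α : Fin n → ℕ) (η : Euc n → ℝ) : Euc n → ℝ :=
  listDeriv ((List.finRange n).flatMap fun i => List.replicate (α i) i) η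

/-- `g` is the weak derivative `D^α f` on `ℝⁿ`. -/
def IsWeakDeriv {n : ℕ} (α : Fin n → ℕ) (f g : Euc n → ℝ) : Prop :=
  ∀ η : Euc n → ℝ, ContDiff ℝ (⊤ : ℕ∞) η → HasCompactSupport η →
    ∫ x, f x * mderiv α η x = (-1 : ℝ) ^ mdeg α * ∫ x, g x * η x

/-- `g` is the weak derivative `D^α f` on an open set `U`. -/
def IsWeakDerivOn {n : ℕ} (U : Set (Euc n)) (α : Fin n → ℕ) (f g : Euc n → ℝ) : Prop :=
  ∀ η : Euc n → ℝ, ContDiff ℝ (⊤ : ℕ∞) η → HasCompactSupport η → tsupport η ⊆ U →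
    ∫ x in U, f x * mderiv α η x = (-1 : ℝ) ^ mdeg α * ∫ x in U, g x * η x

/-- Membership in the Sobolev space `W^{k,p}(U)`. -/
def MemSobolevOn {n : ℕ} (k : ℕ) (p : ℝ) (U : Set (Euc n)) (f : Euc n → ℝ) : Prop :=
  MemLp f (ENNReal.ofReal p) (volume.restrict U) ∧
  ∀ α : Fin n → ℕ, mdeg α ≤ k → ∃ g : Euc n → ℝ,
    MemLp g (ENNReal.ofReal p) (volume.restrict U) ∧ IsWeakDerivOn U α f g

/-- Membership in the local Sobolev space `W^{k,p}_loc(Ω)`. -/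
def MemSobolevLoc {n : ℕ} (k : ℕ) (p : ℝ) (Ω : Set (Euc n)) (f : Euc n → ℝ) : Prop :=
  ∀ U : Set (Euc n), IsOpen U → Bornology.IsBounded U → closure U ⊆ Ω →
    MemSobolevOn k p U f

/-- The normalizing constant `γ(a)` of the Riesz kernel. -/
def rieszGamma (n : ℕ) (a : ℝ) : ℝ :=
  Real.pi ^ ((n : ℝ) / 2) * (2 : ℝ) ^ a * Real.Gamma (a / 2) / Real.Gamma (((n : ℝ) - a) / 2)

/-- The Riesz potential `I_a * g`, valued in `ℝ≥0∞`. -/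
def rieszPot {n : ℕ} (a : ℝ) (g : Euc n → ℝ) (x : Euc n) : ℝ≥0∞ :=
  (ENNReal.ofReal (rieszGamma n a))⁻¹ *
    ∫⁻ y, ENNReal.ofReal (g y) * ENNReal.ofReal (‖x - y‖ ^ (a - (n : ℝ)))

/-- The Riesz capacity `R_{a,p}`. -/
def rieszCap {n : ℕ} (a p : ℝ) (S : Set (Euc n)) : ℝ≥0∞ :=
  ⨅ (g : Euc n → ℝ) (_ : MemLp g (ENNReal.ofReal p) volume ∧ (∀ x, 0 ≤ g x) ∧
      ∀ x ∈ S, 1 ≤ rieszPot a g x),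
    ∫⁻ y, ENNReal.ofReal (g y) ^ p

/-- The precise representative of a (vector-valued) locally integrable function. -/
def preciseRepV {n : ℕ} {F : Type*} [NormedAddCommGroup F] [NormedSpace ℝ F]
    (f : Euc n → F) (x : Euc n) : F :=
  letI := Classical.propDecidable
  if h : ∃ L : F, Tendsto (fun ε : ℝ => ⨍ y in ball x ε, f y) (𝓝[>] (0:ℝ)) (𝓝 L)
  then h.choose else 0

/-- The precise representative of a real-valued locally integrable function. -/
def preciseRep {n : ℕ} (f : Euc n → ℝ) (x : Euc n) : ℝ := preciseRepV f x

/-- The Hardy–Littlewood maximal function (of an `ℝ≥0∞`-valued integrand). -/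
def maxFn {n : ℕ} (g : Euc n → ℝ≥0∞) (x : Euc n) : ℝ≥0∞ :=
  ⨆ (r : ℝ) (_ : 0 < r), (volume (ball x r))⁻¹ * ∫⁻ y in ball x r, g y

/-- `x` is a density point of `S`. -/
def DensityPt {n : ℕ} (S : Set (Euc n)) (x : Euc n) : Prop :=
  Tendsto (fun r : ℝ => volume (S ∩ ball x r) / volume (ball x r)) (𝓝[>] (0:ℝ)) (𝓝 1)

/-- `L` is the approximate differential of `φ` at `x₀`, relative to the domain `A`. -/
def HasApproxDerivAt {n : ℕ} (A : Set (Euc n)) (φ : Euc n → Euc n)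
    (L : Euc n →L[ℝ] Euc n) (x₀ : Euc n) : Prop :=
  DensityPt A x₀ ∧ ∀ ε : ℝ, 0 < ε →
    DensityPt {x | x ∈ A ∧ ‖φ x - φ x₀ - L (x - x₀)‖ ≤ ε * ‖x - x₀‖} x₀

end

/-- `g` is the weak gradient of `f`. -/
def IsWeakGradient {n : ℕ} (f : Euc n → ℝ) (g : Euc n → Euc n) : Prop :=
  ∀ i : Fin n, IsWeakDeriv (Pi.single i 1) f
    (fun x => (inner ℝ (g x) (EuclideanSpace.single i 1) : ℝ))

lemma my_flatMap_nil {n : ℕ} (i : Fin n) (l : List (Fin n)) (h : i ∉ l) :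
    l.flatMap (fun j => List.replicate ((Pi.single i 1 : Fin n → ℕ) j) j) = [] := by
  induction l with
  | nil => rfl
  | cons a l ih =>
    simp only [List.mem_cons, not_or] at h
    rw [List.flatMap_cons, ih h.2, Pi.single_eq_of_ne (Ne.symm h.1)]
    rfl

lemma my_flatMap {n : ℕ} (i : Fin n) (l : List (Fin n)) (hl : l.Nodup) (h : i ∈ l) :
    l.flatMap (fun j => List.replicate ((Pi.single i 1 : Fin n → ℕ) j) j) = [i] := by
  induction l with
  | nil => simp at h
  | cons a l ih =>
    rw [List.nodup_cons] at hl
    rw [List.flatMap_cons]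
    by_cases hai : a = i
    · subst hai
      rw [my_flatMap_nil a l hl.1, Pi.single_eq_same]
      rfl
    · rw [Pi.single_eq_of_ne hai, ih hl.2 (by
        rcases List.mem_cons.1 h with h | h
        · exact absurd h.symm hai
        · exact h)]
      rfl

lemma my_mderiv {n : ℕ} (i : Fin n) (η : Euc n → ℝ) :
    mderiv (Pi.single i 1) η = fun x => fderiv ℝ η x (EuclideanSpace.single i 1) := by
  unfold mderiv
  rw [my_flatMap i _ (List.nodup_finRange n) (List.mem_finRange i)]
  rfl

lemma my_weak {n : ℕ} {f : Euc n → ℝ} {g : Euc n → Euc n} (h : IsWeakGradient f g) (i : Fin n)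
    (η : Euc n → ℝ) (h1 : ContDiff ℝ (⊤ : ℕ∞) η) (h2 : HasCompactSupport η) :
    ∫ y, f y * fderiv ℝ η y (EuclideanSpace.single i 1) = - ∫ y, g y i * η y := by
  have := h i η h1 h2
  rw [my_mderiv] at this
  have e : mdeg (Pi.single i 1 : Fin n → ℕ) = 1 := by simp [mdeg]
  rw [e] at this
  simpa [EuclideanSpace.inner_single_right] using this

/-- the divergence identity -/
lemma my_div {n : ℕ} {f : Euc n → ℝ} {g : Euc n → Euc n} (hf : LocallyIntegrable f)
    (hg : LocallyIntegrable g) (h : IsWeakGradient f g)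
    (ψ : Euc n → ℝ) (h1 : ContDiff ℝ (⊤ : ℕ∞) ψ) (h2 : ∀ z, z ∉ ball (0 : Euc n) 1 → ψ z = 0)
    (x : Euc n) (t : ℝ) (ht : 0 < t) :
    ∫ y, f y * (n * ψ (t⁻¹ • (y - x)) + fderiv ℝ ψ (t⁻¹ • (y - x)) (t⁻¹ • (y - x))) =
      - ∫ y, inner ℝ (g y) (y - x) * ψ (t⁻¹ • (y - x)) := by
  have hz : ∀ y, y ∉ closedBall x t → ψ (t⁻¹ • (y - x)) = 0 := by
    intro y hy
    apply h2
    intro hy'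
    apply hy
    rw [mem_ball_zero_iff, norm_smul, Real.norm_eq_abs, abs_of_pos (by positivity),
      inv_mul_lt_iff₀ ht] at hy'
    rw [mem_closedBall, dist_eq_norm]; linarith
  let η : Fin n → Euc n → ℝ := fun i y => (y i - x i) * ψ (t⁻¹ • (y - x))
  have hη1 : ∀ i, ContDiff ℝ (⊤ : ℕ∞) (η i) := by
    intro i
    have : ContDiff ℝ (⊤ : ℕ∞) (fun y : Euc n => y i) :=
      (EuclideanSpace.proj (𝕜 := ℝ) i).contDiff
    have h3 : ContDiff ℝ (⊤ : ℕ∞) (fun y : Euc n => ψ (t⁻¹ • (y - x))) :=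
      h1.comp (by fun_prop)
    exact (this.sub contDiff_const).mul h3
  have hη2 : ∀ i, HasCompactSupport (η i) := by
    intro i
    refine HasCompactSupport.intro (isCompact_closedBall x t) ?_
    intro y hy
    simp [η, hz y hy]
  have hd : ∀ i y, fderiv ℝ (η i) y (EuclideanSpace.single i 1) =
      ψ (t⁻¹ • (y - x)) + (t⁻¹ • (y - x)) i * fderiv ℝ ψ (t⁻¹ • (y - x)) (EuclideanSpace.single i 1) := by
    intro i y
    have e1 : HasFDerivAt (fun y : Euc n => y i - x i) (EuclideanSpace.proj (𝕜 := ℝ) i : Euc n →L[ℝ] ℝ) y :=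
      ((EuclideanSpace.proj (𝕜 := ℝ) i : Euc n →L[ℝ] ℝ).hasFDerivAt (x := y)).sub_const (x i)
    have e2 : HasFDerivAt (fun y : Euc n => t⁻¹ • (y - x)) (t⁻¹ • ContinuousLinearMap.id ℝ (Euc n)) y :=
      ((hasFDerivAt_id y).sub_const x).const_smul t⁻¹
    have e3 : HasFDerivAt ψ (fderiv ℝ ψ (t⁻¹ • (y - x))) (t⁻¹ • (y - x)) :=
      (h1.differentiable (by simp) _).hasFDerivAt
    have e4 := e1.mul (e3.comp y e2)
    have : fderiv ℝ (η i) y = _ := e4.fderiv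
    rw [this]
    simp
    ring
  have hint : ∀ i, Integrable (fun y => f y * fderiv ℝ (η i) y (EuclideanSpace.single i 1)) := by
    intro i
    have hc : Continuous (fun y => fderiv ℝ (η i) y (EuclideanSpace.single i 1)) :=
      ((hη1 i).continuous_fderiv (by simp)).clm_apply continuous_const
    have hs : HasCompactSupport (fun y => fderiv ℝ (η i) y (EuclideanSpace.single i 1)) :=
      (hη2 i).fderiv_apply (𝕜 := ℝ) _
    simpa [mul_comm] using hf.integrable_smul_left_of_hasCompactSupport hc hs
  have hgint : ∀ i, Integrable (fun y => g y i * η i y) := by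
    intro i
    have := hg.integrable_smul_left_of_hasCompactSupport (hη1 i).continuous (hη2 i)
    have := (EuclideanSpace.proj (𝕜 := ℝ) i : Euc n →L[ℝ] ℝ).integrable_comp this
    simpa [mul_comm] using this
  calc _ = ∫ y, ∑ i, f y * fderiv ℝ (η i) y (EuclideanSpace.single i 1) := by
        congr 1; ext y
        rw [← Finset.mul_sum]
        congr 1
        simp_rw [hd]
        rw [Finset.sum_add_distrib]
        congr 1
        · simp
        · have : t⁻¹ • (y - x) = ∑ i, (t⁻¹ • (y - x)) i • (EuclideanSpace.single i (1:ℝ) : Euc n) := by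
            ext j
            simp [Finset.sum_apply, Pi.single_apply]
          conv_lhs => rw [this, map_sum]
          simp only [map_smul, smul_eq_mul]
          rw [← this]
    _ = ∑ i, ∫ y, f y * fderiv ℝ (η i) y (EuclideanSpace.single i 1) :=
        integral_finsetSum _ fun i _ => hint i
    _ = ∑ i, - ∫ y, g y i * η i y := by
        refine Finset.sum_congr rfl fun i _ => my_weak h i _ (hη1 i) (hη2 i)
    _ = - ∫ y, ∑ i, g y i * η i y := by
        rw [Finset.sum_neg_distrib, integral_finsetSum _ fun i _ => hgint i]
    _ = _ := by
        congr 2; ext y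
        simp only [η, PiLp.inner_apply, Finset.sum_mul]
        refine Finset.sum_congr rfl fun i _ => ?_
        simp
        ring

lemma my_int {n : ℕ} {f : Euc n → ℝ} (hf : LocallyIntegrable f)
    (Φ : Euc n → ℝ) (h1 : Continuous Φ) (h2 : ∀ z, z ∉ closedBall (0 : Euc n) 1 → Φ z = 0)
    (x : Euc n) (t : ℝ) (ht : 0 < t) : Integrable (fun y => f y * Φ (t⁻¹ • (y - x))) := by
  have hc : Continuous (fun y => Φ (t⁻¹ • (y - x))) := h1.comp (by fun_prop)
  have hs : HasCompactSupport (fun y => Φ (t⁻¹ • (y - x))) := by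
    refine HasCompactSupport.intro (isCompact_closedBall x t) fun y hy => h2 _ fun hy' => hy ?_
    rw [mem_closedBall_zero_iff, norm_smul, Real.norm_eq_abs, abs_of_pos (by positivity),
      inv_mul_le_iff₀ ht] at hy'
    rw [mem_closedBall, dist_eq_norm]; linarith
  simpa [mul_comm] using hf.integrable_smul_left_of_hasCompactSupport hc hs

lemma my_deriv {n : ℕ} {f : Euc n → ℝ} (hf : LocallyIntegrable f)
    (ψ : Euc n → ℝ) (h1 : ContDiff ℝ (⊤ : ℕ∞) ψ) (h2 : ∀ z, z ∉ ball (0 : Euc n) 1 → ψ z = 0)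
    (x : Euc n) (t : ℝ) (ht : 0 < t) :
    HasDerivAt (fun t : ℝ => ∫ y, f y * ψ (t⁻¹ • (y - x)))
      (∫ y, f y * (-t⁻¹ * fderiv ℝ ψ (t⁻¹ • (y - x)) (t⁻¹ • (y - x)))) t := by
  have hz : ∀ s > 0, ∀ y, y ∉ closedBall x s → s⁻¹ • (y - x) ∉ closedBall (0 : Euc n) 1 := by
    intro s hs y hy
    refine fun hy' => hy ?_
    rw [mem_closedBall_zero_iff, norm_smul, Real.norm_eq_abs, abs_of_pos (by positivity),
      inv_mul_le_iff₀ hs] at hy'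
    rw [mem_closedBall, dist_eq_norm]; linarith
  have hψs : HasCompactSupport ψ := HasCompactSupport.intro (isCompact_closedBall 0 1)
    fun z hz => h2 z fun h => hz (ball_subset_closedBall h)
  have hts : tsupport ψ ⊆ closedBall 0 1 := by
    apply closure_minimal _ isClosed_closedBall
    intro z hz
    by_contra hh
    exact hz (h2 z fun h => hh (ball_subset_closedBall h))
  have hΦ0 : ∀ z ∉ closedBall (0 : Euc n) 1, fderiv ℝ ψ z = 0 := by
    intro z hz
    by_contra hh
    exact hz (hts (support_fderiv_subset ℝ hh))
  have hΦc : Continuous (fun z => fderiv ℝ ψ z z) :=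
    (h1.continuous_fderiv (by simp)).clm_apply continuous_id
  obtain ⟨M, hM⟩ := (isCompact_closedBall (0 : Euc n) 1).exists_bound_of_continuousOn hΦc.continuousOn
  have hM' : ∀ z, ‖fderiv ℝ ψ z z‖ ≤ |M| := by
    intro z
    by_cases hz : z ∈ closedBall (0 : Euc n) 1
    · exact (hM z hz).trans (le_abs_self _)
    · simp [hΦ0 z hz]
  have hcont : ∀ s : ℝ, Continuous (fun y => ψ (s⁻¹ • (y - x))) := fun s =>
    h1.continuous.comp (by fun_prop)
  have hmeas : ∀ s : ℝ, AEStronglyMeasurable (fun y => f y * ψ (s⁻¹ • (y - x))) volume := fun s =>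
    hf.aestronglyMeasurable.mul (hcont s).aestronglyMeasurable
  refine (hasDerivAt_integral_of_dominated_loc_of_deriv_le (μ := volume)
    (F := fun t y => f y * ψ (t⁻¹ • (y - x)))
    (F' := fun t y => f y * (-t⁻¹ * fderiv ℝ ψ (t⁻¹ • (y - x)) (t⁻¹ • (y - x))))
    (bound := (closedBall x (2 * t)).indicator fun y => ‖f y‖ * (2 * t⁻¹ * |M|))
    (s := Ioo (t / 2) (2 * t)) (Ioo_mem_nhds (by linarith) (by linarith))
    (Eventually.of_forall hmeas) ?_ ?_ ?_ ?_ ?_).2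
  · have hs : HasCompactSupport (fun y => ψ (t⁻¹ • (y - x))) :=
      HasCompactSupport.intro (isCompact_closedBall x t) fun y hy =>
        h2 _ fun h => hz t ht y hy (ball_subset_closedBall h)
    simpa [mul_comm] using hf.integrable_smul_left_of_hasCompactSupport (hcont t) hs
  · refine hf.aestronglyMeasurable.mul (Continuous.aestronglyMeasurable ?_)
    exact continuous_const.mul (hΦc.comp (by fun_prop : Continuous fun y : Euc n => t⁻¹ • (y - x)))
  · refine Eventually.of_forall fun y s hs => ?_
    have hs0 : 0 < s := by linarith [hs.1]
    by_cases hy : y ∈ closedBall x (2 * t)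
    · rw [indicator_of_mem hy, norm_mul, norm_mul]
      have : ‖-s⁻¹‖ ≤ 2 * t⁻¹ := by
        rw [norm_neg, Real.norm_eq_abs, abs_of_pos (by positivity)]
        have := inv_anti₀ (by positivity : 0 < t / 2) hs.1.le
        rw [inv_div] at this
        rwa [← div_eq_mul_inv]
      gcongr
      exact hM' _
    · have hy' : y ∉ closedBall x s := fun h => hy (closedBall_subset_closedBall hs.2.le h)
      rw [indicator_of_notMem hy, hΦ0 _ (hz s hs0 y hy')]
      simp
  · refine IntegrableOn.integrable_indicator ?_ measurableSet_closedBall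
    exact (hf.integrableOn_isCompact (isCompact_closedBall _ _)).norm.mul_const _
  · refine Eventually.of_forall fun y s hs => ?_
    have hs0 : 0 < s := by linarith [hs.1]
    have e2 : HasDerivAt (fun s : ℝ => s⁻¹ • (y - x)) ((-(s ^ 2)⁻¹) • (y - x)) s :=
      (hasDerivAt_inv hs0.ne').smul_const _
    have e3 : HasFDerivAt ψ (fderiv ℝ ψ (s⁻¹ • (y - x))) (s⁻¹ • (y - x)) :=
      (h1.differentiable (by simp) _).hasFDerivAt
    have e4 := (e3.comp_hasDerivAt s e2).const_mul (f y)
    refine e4.congr_deriv ?_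
    simp only [map_smul, smul_eq_mul]
    ring

lemma my_lip {n : ℕ} {f : Euc n → ℝ} {g : Euc n → Euc n} (hf : LocallyIntegrable f)
    (hg : LocallyIntegrable g) (h : IsWeakGradient f g)
    (ψ : Euc n → ℝ) (h1 : ContDiff ℝ (⊤ : ℕ∞) ψ) (h2 : ∀ z, z ∉ ball (0 : Euc n) 1 → ψ z = 0)
    (h3 : ∀ z, |ψ z| ≤ 1) (x : Euc n) (α : ℝ)
    (hα : ∀ t > 0, ∫ y in ball x t, ‖g y‖ ≤ α * volume.real (ball x t))
    (r s : ℝ) (hr : 0 < r) (hs : 0 < s) :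
    |(s ^ n)⁻¹ * (∫ y, f y * ψ (s⁻¹ • (y - x))) - (r ^ n)⁻¹ * (∫ y, f y * ψ (r⁻¹ • (y - x)))|
      ≤ α * volume.real (ball (0 : Euc n) 1) * |s - r| := by
  have key : ∀ t ∈ Ioi (0 : ℝ), HasDerivWithinAt
      (fun t : ℝ => (t ^ n)⁻¹ * (∫ y, f y * ψ (t⁻¹ • (y - x))))
      ((t ^ (n + 1))⁻¹ * ∫ y, inner ℝ (g y) (y - x) * ψ (t⁻¹ • (y - x))) (Ioi 0) t := by
    intro t ht
    have ht : 0 < t := ht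
    have d1 := ((hasDerivAt_pow n t).inv (by positivity)).mul (my_deriv hf ψ h1 h2 x t ht)
    have d2 := my_div hf hg h ψ h1 h2 x t ht
    have i1 : Integrable (fun y => f y * ψ (t⁻¹ • (y - x))) :=
      my_int hf ψ h1.continuous (fun z hz => h2 z fun h => hz (ball_subset_closedBall h)) x t ht
    have i2 : Integrable (fun y => f y * fderiv ℝ ψ (t⁻¹ • (y - x)) (t⁻¹ • (y - x))) := by
      refine my_int hf (fun z => fderiv ℝ ψ z z)
        ((h1.continuous_fderiv (by simp)).clm_apply continuous_id) ?_ x t ht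
      intro z hz
      have hts : tsupport ψ ⊆ closedBall 0 1 := by
        apply closure_minimal _ isClosed_closedBall
        intro z hz
        by_contra hh
        exact hz (h2 z fun h => hh (ball_subset_closedBall h))
      have : fderiv ℝ ψ z = 0 := by
        by_contra hh
        exact hz (hts (support_fderiv_subset ℝ hh))
      simp [this]
    have d3 : ∫ y, f y * (n * ψ (t⁻¹ • (y - x)) + fderiv ℝ ψ (t⁻¹ • (y - x)) (t⁻¹ • (y - x)))
       = n * (∫ y, f y * ψ (t⁻¹ • (y - x))) + ∫ y, f y * fderiv ℝ ψ (t⁻¹ • (y - x)) (t⁻¹ • (y - x)) := by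
      rw [← integral_const_mul, ← integral_add (i1.const_mul _) i2]
      congr 1; ext y; ring
    have d4 : ∫ y, f y * (-t⁻¹ * fderiv ℝ ψ (t⁻¹ • (y - x)) (t⁻¹ • (y - x))) =
        -t⁻¹ * ∫ y, f y * fderiv ℝ ψ (t⁻¹ • (y - x)) (t⁻¹ • (y - x)) := by
      rw [← integral_const_mul]
      congr 1; ext y; ring
    have d5 : ∫ y, inner ℝ (g y) (y - x) * ψ (t⁻¹ • (y - x)) = -(n * (∫ y, f y * ψ (t⁻¹ • (y - x))) + ∫ y, f y * fderiv ℝ ψ (t⁻¹ • (y - x)) (t⁻¹ • (y - x))) := by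
      rw [← d3, d2, neg_neg]
    refine (d1.congr_deriv ?_).hasDerivWithinAt
    rw [d4, d5]
    rcases n with _ | m
    · simp
    · simp only [Nat.add_sub_cancel, Pi.inv_apply]
      field_simp
      ring
  have bd : ∀ t ∈ Ioi (0 : ℝ), ‖(t ^ (n + 1))⁻¹ * ∫ y, inner ℝ (g y) (y - x) * ψ (t⁻¹ • (y - x))‖
      ≤ α * volume.real (ball (0 : Euc n) 1) := by
    intro t ht
    have ht : 0 < t := ht
    have hvol : volume.real (ball x t) = t ^ n * volume.real (ball (0 : Euc n) 1) := by
      rw [measureReal_def, Measure.addHaar_ball_of_pos _ _ ht, ENNReal.toReal_mul,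
        ENNReal.toReal_ofReal (by positivity), finrank_euclideanSpace_fin]
      rfl
    have b1 : ‖∫ y, inner ℝ (g y) (y - x) * ψ (t⁻¹ • (y - x))‖ ≤ ∫ y, (ball x t).indicator (fun y => t * ‖g y‖) y := by
      refine norm_integral_le_of_norm_le ?_ (Eventually.of_forall fun y => ?_)
      · refine IntegrableOn.integrable_indicator ?_ measurableSet_ball
        exact ((hg.integrableOn_isCompact (isCompact_closedBall x t)).mono_set
          ball_subset_closedBall).norm.const_mul _
      · by_cases hy : y ∈ ball x t
        · rw [indicator_of_mem hy, norm_mul]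
          have c1 : ‖(inner ℝ (g y) (y - x) : ℝ)‖ ≤ ‖g y‖ * t := by
            refine (norm_inner_le_norm _ _).trans ?_
            rw [mem_ball, dist_eq_norm] at hy
            gcongr
          have c2 : ‖ψ (t⁻¹ • (y - x))‖ ≤ 1 := h3 _
          calc _ ≤ (‖g y‖ * t) * 1 := by gcongr
            _ = _ := by ring
        · rw [indicator_of_notMem hy, h2, mul_zero, norm_zero]
          intro hy'
          apply hy
          rw [mem_ball_zero_iff, norm_smul, Real.norm_eq_abs, abs_of_pos (by positivity),
            inv_mul_lt_iff₀ ht] at hy'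
          rw [mem_ball, dist_eq_norm]; linarith
    rw [integral_indicator measurableSet_ball, integral_const_mul] at b1
    rw [norm_mul, Real.norm_eq_abs, abs_of_pos (by positivity), inv_mul_le_iff₀ (by positivity)]
    calc _ ≤ _ := b1
      _ ≤ t * (α * volume.real (ball x t)) := by gcongr; exact hα t ht
      _ = _ := by rw [hvol]; ring
  exact (convex_Ioi (0:ℝ)).norm_image_sub_le_of_norm_hasDerivWithin_le key bd hr hs

lemma my_avg {n : ℕ} {f : Euc n → ℝ} {g : Euc n → Euc n} (hf : LocallyIntegrable f)
    (hg : LocallyIntegrable g) (h : IsWeakGradient f g) (x : Euc n) (α : ℝ)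
    (hα : ∀ t > 0, ∫ y in ball x t, ‖g y‖ ≤ α * volume.real (ball x t))
    (r s : ℝ) (hr : 0 < r) (hs : 0 < s) :
    |(⨍ y in ball x s, f y) - ⨍ y in ball x r, f y| ≤ α * |s - r| := by
  let ψ : ℕ → ContDiffBump (0 : Euc n) := fun k =>
    ⟨1 - 1 / ((k : ℝ) + 2), 1, by
      rw [sub_pos, div_lt_one (by positivity)]
      have : (0:ℝ) ≤ k := k.cast_nonneg
      linarith, by
      have : 0 < 1 / ((k : ℝ) + 2) := by positivity
      linarith⟩
  have hψ0 : ∀ k z, z ∉ ball (0 : Euc n) 1 → ψ k z = 0 := by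
    intro k z hz
    apply (ψ k).zero_of_le_dist
    simpa using hz
  have hlim : ∀ t > 0, Tendsto (fun k => (t ^ n)⁻¹ * ∫ y, f y * ψ k (t⁻¹ • (y - x))) atTop
      (𝓝 (volume.real (ball (0 : Euc n) 1) * ⨍ y in ball x t, f y)) := by
    intro t ht
    have hvol : volume.real (ball x t) = t ^ n * volume.real (ball (0 : Euc n) 1) := by
      rw [measureReal_def, Measure.addHaar_ball_of_pos _ _ ht, ENNReal.toReal_mul,
        ENNReal.toReal_ofReal (by positivity), finrank_euclideanSpace_fin]
      rfl
    have hv1 : 0 < volume.real (ball (0 : Euc n) 1) :=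
      ENNReal.toReal_pos (measure_ball_pos _ _ one_pos).ne' measure_ball_lt_top.ne
    have e : volume.real (ball (0 : Euc n) 1) * ⨍ y in ball x t, f y =
        (t ^ n)⁻¹ * ∫ y, (ball x t).indicator f y := by
      rw [setAverage_eq, hvol, integral_indicator measurableSet_ball, smul_eq_mul]
      field_simp
    rw [e]
    refine Tendsto.const_mul _ ?_
    have hmem : ∀ y, y ∈ ball x t ↔ t⁻¹ • (y - x) ∈ ball (0 : Euc n) 1 := by
      intro y
      rw [mem_ball_zero_iff, norm_smul, Real.norm_eq_abs, abs_of_pos (by positivity),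
            inv_mul_lt_iff₀ ht, mem_ball, dist_eq_norm, mul_one]
    refine tendsto_integral_of_dominated_convergence
      ((ball x t).indicator fun y => ‖f y‖) ?_ ?_ ?_ ?_
    · intro k
      refine hf.aestronglyMeasurable.mul (Continuous.aestronglyMeasurable ?_)
      exact (ψ k).continuous.comp (by fun_prop : Continuous fun y : Euc n => t⁻¹ • (y - x))
    · refine IntegrableOn.integrable_indicator ?_ measurableSet_ball
      exact ((hf.integrableOn_isCompact (isCompact_closedBall x t)).mono_set
          ball_subset_closedBall).norm
    · refine fun k => Eventually.of_forall fun y => ?_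
      by_cases hy : y ∈ ball x t
      · rw [indicator_of_mem hy, norm_mul]
        have : ‖ψ k (t⁻¹ • (y - x))‖ ≤ 1 := by
          rw [Real.norm_eq_abs, abs_of_nonneg (ψ k).nonneg]
          exact (ψ k).le_one
        exact mul_le_of_le_one_right (norm_nonneg _) this
      · rw [indicator_of_notMem hy, hψ0 k _ (fun h => hy ((hmem y).2 h))]
        simp
    · refine Eventually.of_forall fun y => ?_
      by_cases hy : y ∈ ball x t
      · rw [indicator_of_mem hy]
        refine tendsto_const_nhds.congr' ?_
        have hy1 := (hmem y).1 hy
        rw [mem_ball_zero_iff] at hy1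
        have hl : Tendsto (fun k : ℕ => 1 - 1 / ((k : ℝ) + 2)) atTop (𝓝 (1 - 0)) := by
          refine tendsto_const_nhds.sub ?_
          have := (tendsto_natCast_atTop_atTop (R := ℝ)).atTop_add (tendsto_const_nhds (x := (2:ℝ)))
          simpa [Pi.inv_def] using this.inv_tendsto_atTop
        rw [sub_zero] at hl
        filter_upwards [hl.eventually (lt_mem_nhds hy1)] with k hk
        rw [(ψ k).one_of_mem_closedBall, mul_one]
        rw [mem_closedBall_zero_iff]
        exact hk.le
      · rw [indicator_of_notMem hy]
        refine tendsto_const_nhds.congr fun k => ?_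
        rw [hψ0 k _ (fun h => hy ((hmem y).2 h)), mul_zero]
  have hv1 : 0 < volume.real (ball (0 : Euc n) 1) :=
    ENNReal.toReal_pos (measure_ball_pos _ _ one_pos).ne' measure_ball_lt_top.ne
  have hfin := le_of_tendsto ((hlim s hs).sub (hlim r hr)).abs (Eventually.of_forall fun k =>
    my_lip hf hg h (ψ k) (ψ k).contDiff (hψ0 k) (fun z => by
      rw [abs_of_nonneg (ψ k).nonneg]; exact (ψ k).le_one) x α hα r s hr hs)
  rw [← mul_sub, abs_mul, abs_of_pos hv1, mul_right_comm, mul_comm] at hfin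
  exact le_of_mul_le_mul_right hfin hv1

/-- the precise representative is approximated by ball averages at
points where the maximal function of the gradient is bounded. -/
theorem abs_preciseRep_sub_average_le {n : ℕ} :
    ∃ C : ℝ, 0 < C ∧
      ∀ (p : ℝ≥0∞), 1 ≤ p →
      ∀ (f : Euc n → ℝ) (g : Euc n → Euc n),
        MemLp f p volume → MemLp g p volume → IsWeakGradient f g →
      ∀ α : ℝ, 0 < α →
      ∀ x : Euc n, maxFn (fun y => ENNReal.ofReal ‖g y‖) x ≤ ENNReal.ofReal α →
        Tendsto (fun δ : ℝ => ⨍ y in ball x δ, f y) (𝓝[>] (0:ℝ)) (𝓝 (preciseRep f x)) →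
      ∀ r : ℝ, 0 < r →
        |preciseRep f x - ⨍ y in ball x r, f y| ≤ C * r * α := by
  refine ⟨1, one_pos, ?_⟩
  intro p hp f g hf hg h α hα x hM hlim r hr
  have hf' := hf.locallyIntegrable hp
  have hg' := hg.locallyIntegrable hp
  have hb : ∀ t > 0, ∫ y in ball x t, ‖g y‖ ≤ α * volume.real (ball x t) := by
    intro t ht
    have h1 : (volume (ball x t))⁻¹ * ∫⁻ y in ball x t, ENNReal.ofReal ‖g y‖ ≤ ENNReal.ofReal α :=
      le_trans (le_iSup₂ (f := fun (r : ℝ) (_ : 0 < r) =>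
        (volume (ball x r))⁻¹ * ∫⁻ y in ball x r, ENNReal.ofReal ‖g y‖) t ht) hM
    have v0 : volume (ball x t) ≠ 0 := (measure_ball_pos _ _ ht).ne'
    have v1 : volume (ball x t) ≠ ∞ := measure_ball_lt_top.ne
    rw [mul_comm, ← div_eq_mul_inv, ENNReal.div_le_iff v0 v1] at h1
    rw [integral_eq_lintegral_of_nonneg_ae (Eventually.of_forall fun y => norm_nonneg _)
      hg'.aestronglyMeasurable.norm.restrict]
    have := ENNReal.toReal_mono (ENNReal.mul_ne_top ENNReal.ofReal_ne_top v1) h1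
    rwa [ENNReal.toReal_mul, ENNReal.toReal_ofReal hα.le] at this
  have hab : Tendsto (fun s : ℝ => α * |s - r|) (𝓝[>] 0) (𝓝 (α * |0 - r|)) := by
    refine Tendsto.mono_left ?_ nhdsWithin_le_nhds
    exact (by fun_prop : Continuous fun s : ℝ => α * |s - r|).tendsto 0
  have := le_of_tendsto_of_tendsto (hlim.sub_const (⨍ y in ball x r, f y)).abs hab (by
    filter_upwards [self_mem_nhdsWithin] with s hs
    exact my_avg hf' hg' h x α hb r s hr hs)
  rw [zero_sub, abs_neg, abs_of_pos hr] at this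
  linarith
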